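/- There exists a Lagrangian subspace A of (⋀³V, σ) such that A contains no nonzero completely decomposable element (i.e. no nonzero element of the form v₀∧v₁∧v₂ with v₀, v₁, v₂ ∈ V) and such that dim(A ∩ F_v) ≤ 2 for every nonzero v ∈ V. (This is the nonemptiness of the set 𝕃𝔾(⋀³V)⁰ of Lagrangians parametrizing EPW sextics with the mildest possible singularities.) -/

import Mathlib

open ExteriorAlgebra

/-- The subspace `F_v = v ∧ ⋀²V = {v∧β : β ∈ ⋀²V}` of `⋀³V`, as a submodule of the
exterior algebra. -/
noncomputable def Fsub {V : Type*} [AddCommGroup V] [Module ℂ V] (v : V) :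
    Submodule ℂ (ExteriorAlgebra ℂ V) :=
  (⋀[ℂ]^2 V).map (LinearMap.mulLeft ℂ (ExteriorAlgebra.ι ℂ v))

/-! ### Coordinates on `⋀²ℂ⁵` and parametrised families of symmetric matrices -/

/-- First index of the `k`-th pair. -/
def pairI : Fin 10 → Fin 5 := ![0, 0, 0, 0, 1, 1, 1, 2, 2, 3]

/-- Second index of the `k`-th pair. -/
def pairJ : Fin 10 → Fin 5 := ![1, 2, 3, 4, 2, 3, 4, 3, 4, 4]

/-- Coordinates of `y ∧ z`. -/
def wedgeC (y z : Fin 5 → ℂ) (k : Fin 10) : ℂ := y (pairI k) * z (pairJ k) - y (pairJ k) * z (pairI k)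

/-- Index of the pair `{i, i.succAbove a}`. -/
def starIdx : Fin 5 → Fin 4 → Fin 10 :=
  ![![0, 1, 2, 3], ![0, 4, 5, 6], ![1, 4, 7, 8], ![2, 5, 7, 9], ![3, 6, 8, 9]]

/-- `± u ∧ e_j` with `j = i.succAbove a`, with the sign making the `starIdx i a` coordinate `u i`. -/
def starVec (i : Fin 5) (u : Fin 5 → ℂ) (a : Fin 4) (k : Fin 10) : ℂ :=
  if i < i.succAbove a then wedgeC u (Pi.single (i.succAbove a) 1) k
  else wedgeC (Pi.single (i.succAbove a) 1) u k

/-- The matrix of the quadratic form `γ ↦ u ∧ γ ∧ γ`. -/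
def PM (u : Fin 5 → ℂ) : Fin 10 → Fin 10 → ℂ :=
  ![![0, 0, 0, 0, 0, 0, 0, u 4, -u 3, u 2],
    ![0, 0, 0, 0, 0, -u 4, u 3, 0, 0, -u 1],
    ![0, 0, 0, 0, u 4, 0, -u 2, 0, u 1, 0],
    ![0, 0, 0, 0, -u 3, u 2, 0, -u 1, 0, 0],
    ![0, 0, u 4, -u 3, 0, 0, 0, 0, 0, u 0],
    ![0, -u 4, 0, u 2, 0, 0, 0, 0, -u 0, 0],
    ![0, u 3, -u 2, 0, 0, 0, 0, u 0, 0, 0],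
    ![u 4, 0, 0, -u 1, 0, 0, u 0, 0, 0, 0],
    ![-u 3, 0, u 1, 0, 0, -u 0, 0, 0, 0, 0],
    ![u 2, -u 1, 0, 0, u 0, 0, 0, 0, 0, 0]]

lemma PM_symm (u : Fin 5 → ℂ) (x y : Fin 10) : PM u x y = PM u y x := by
  fin_cases x <;> fin_cases y <;> rfl

/-- Block form of a symmetric matrix with prescribed kernel. -/
noncomputable def blk {m n : ℕ} (k : Fin n → Fin m → ℂ) (D : Sym2 (Fin n) → ℂ) :
    Fin m ⊕ Fin n → Fin m ⊕ Fin n → ℂ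
  | .inl a, .inl b => ∑ t, ∑ t', k t a * k t' b * D s(t, t')
  | .inl a, .inr t' => -∑ t, k t a * D s(t, t')
  | .inr t, .inl b => -∑ t', k t' b * D s(t, t')
  | .inr t, .inr t' => D s(t, t')

lemma blk_of_kernel {m n : ℕ} {X : Type*} (M : X → X → ℂ) (hM : ∀ x y, M x y = M y x)
    (e : Fin m ⊕ Fin n ≃ X) (k : Fin n → Fin m → ℂ)
    (h : ∀ a x, M x (e (.inl a)) + ∑ t, M x (e (.inr t)) * k t a = 0) :
    ∃ D : Sym2 (Fin n) → ℂ, ∀ x y, M x y = blk k D (e.symm x) (e.symm y) := by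
  refine ⟨Sym2.lift ⟨fun t t' => M (e (.inr t)) (e (.inr t')), fun _ _ => hM _ _⟩, ?_⟩
  have h1 : ∀ x b, M x (e (.inl b)) = -∑ t, M x (e (.inr t)) * k t b := fun x b =>
    eq_neg_of_add_eq_zero_left (h b x)
  intro x y
  obtain ⟨x, rfl⟩ := e.surjective x
  obtain ⟨y, rfl⟩ := e.surjective y
  simp only [Equiv.symm_apply_apply]
  rcases x with a | t <;> rcases y with b | t' <;> simp only [blk, Sym2.lift_mk]
  · rw [h1, ← Finset.sum_neg_distrib, Finset.sum_comm]
    refine Finset.sum_congr rfl fun t _ => ?_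
    rw [hM, h1, neg_mul, neg_neg, Finset.sum_mul]
    refine Finset.sum_congr rfl fun t' _ => ?_
    rw [hM]; ring
  · rw [hM, h1]
    congr 1
    refine Finset.sum_congr rfl fun t _ => ?_
    rw [hM]; ring
  · rw [h1]
    congr 1
    refine Finset.sum_congr rfl fun t _ => ?_
    ring

/-- Block form of a symmetric matrix with prescribed restriction to a subspace. -/
noncomputable def blk3 {m n : ℕ} (k : Fin n → Fin m → ℂ) (G : Fin m → Fin m → ℂ)
    (B : Fin m → Fin n → ℂ) (D : Sym2 (Fin n) → ℂ) :
    Fin m ⊕ Fin n → Fin m ⊕ Fin n → ℂ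
  | .inl a, .inl b => G a b - ∑ t, B a t * k t b - ∑ t, B b t * k t a
      - ∑ t, ∑ t', k t a * k t' b * D s(t, t')
  | .inl a, .inr t => B a t
  | .inr t, .inl b => B b t
  | .inr t, .inr t' => D s(t, t')

lemma blk3_of_restrict {m n : ℕ} {X : Type*} [Fintype X] (M : X → X → ℂ)
    (hM : ∀ x y, M x y = M y x)
    (e : Fin m ⊕ Fin n ≃ X) (v : Fin m → X → ℂ)
    (hv : ∀ a b, v a (e (.inl b)) = if a = b then 1 else 0) :
    ∃ (B : Fin m → Fin n → ℂ) (D : Sym2 (Fin n) → ℂ), ∀ x y,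
      M x y = blk3 (fun t a => v a (e (.inr t))) (fun a b => ∑ x, ∑ y, v a x * M x y * v b y)
        B D (e.symm x) (e.symm y) := by
  refine ⟨fun a t => M (e (.inl a)) (e (.inr t)),
    Sym2.lift ⟨fun t t' => M (e (.inr t)) (e (.inr t')), fun _ _ => hM _ _⟩, ?_⟩
  intro x y
  obtain ⟨x, rfl⟩ := e.surjective x
  obtain ⟨y, rfl⟩ := e.surjective y
  simp only [Equiv.symm_apply_apply]
  rcases x with a | t <;> rcases y with b | t' <;> simp only [blk3, Sym2.lift_mk]
  · simp only [← e.sum_comp, Fintype.sum_sum_type, hv]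
    simp only [ite_mul, one_mul, zero_mul, mul_ite, mul_one, mul_zero, Finset.sum_ite_eq,
      Finset.mem_univ, if_true, Finset.sum_add_distrib, Finset.sum_ite_irrel, Finset.sum_const_zero]
    have e1 : ∑ t, v a (e (.inr t)) * M (e (.inr t)) (e (.inl b))
        = ∑ t, M (e (.inl b)) (e (.inr t)) * v a (e (.inr t)) :=
      Finset.sum_congr rfl fun t _ => by rw [hM]; ring
    have e2 : ∑ t, ∑ t', v a (e (.inr t)) * M (e (.inr t)) (e (.inr t')) * v b (e (.inr t'))
        = ∑ t, ∑ t', v a (e (.inr t)) * v b (e (.inr t')) * M (e (.inr t)) (e (.inr t')) :=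
      Finset.sum_congr rfl fun t _ => Finset.sum_congr rfl fun t' _ => by ring
    rw [e1, e2]
    ring
  · rw [hM]

/-- Reduced bases of subspaces. -/
lemma exists_pivots {N : ℕ} (K : Submodule ℂ (Fin N → ℂ)) (m : ℕ) (hm : m ≤ Module.finrank ℂ K) :
    ∃ (s : Fin m → Fin N) (v : Fin m → Fin N → ℂ), (∀ a, v a ∈ K) ∧
      ∀ a b, v a (s b) = if a = b then 1 else 0 := by
  induction m with
  | zero => exact ⟨Fin.elim0, Fin.elim0, fun a => a.elim0, fun a => a.elim0⟩
  | succ m ih =>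
    obtain ⟨s, v, hv, hd⟩ := ih (by omega)
    -- a nonzero vector of `K` vanishing at the pivots
    let φ : K →ₗ[ℂ] (Fin m → ℂ) := LinearMap.pi fun b => (LinearMap.proj (s b)).comp K.subtype
    have hker : LinearMap.ker φ ≠ ⊥ := by
      apply LinearMap.ker_ne_bot_of_finrank_lt
      simp; omega
    obtain ⟨w, hw, hw0⟩ := (Submodule.ne_bot_iff _).1 hker
    have hws : ∀ b, (w : Fin N → ℂ) (s b) = 0 := fun b => congrFun (LinearMap.mem_ker.1 hw) b
    obtain ⟨t, ht⟩ : ∃ t, (w : Fin N → ℂ) t ≠ 0 := by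
      by_contra hcon
      push Not at hcon
      exact hw0 (Subtype.ext (funext hcon))
    set w' : Fin N → ℂ := ((w : Fin N → ℂ) t)⁻¹ • (w : Fin N → ℂ) with hw'
    have hw't : w' t = 1 := by simp [hw', ht]
    have hw's : ∀ b, w' (s b) = 0 := fun b => by simp [hw', hws]
    have hw'K : w' ∈ K := K.smul_mem _ w.2
    refine ⟨Fin.cons t s, Fin.cons w' fun a => v a - v a t • w', ?_, ?_⟩
    · intro a
      refine Fin.cases hw'K (fun a => ?_) a
      exact K.sub_mem (hv a) (K.smul_mem _ hw'K)
    · intro a b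
      refine Fin.cases ?_ (fun a => ?_) a <;> refine Fin.cases ?_ (fun b => ?_) b
      · simp [hw't]
      · simp [hw's, (Fin.succ_ne_zero b).symm]
      · simp [hw't]
      · simp [hw's, hd]

lemma exists_equiv_extend {m n : ℕ} {N : ℕ} (hN : N = m + n) (s : Fin m → Fin N)
    (hs : Function.Injective s) :
    ∃ e : Fin m ⊕ Fin n ≃ Fin N, ∀ a, e (.inl a) = s a := by
  classical
  have hc : Fintype.card (Fin n) = Fintype.card ((Set.range s)ᶜ : Set (Fin N)) := by
    rw [Fintype.card_compl_set, Set.card_range_of_injective hs]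
    simp [hN]
  let e2 := Fintype.equivOfCardEq hc
  refine ⟨(Equiv.sumCongr (Equiv.ofInjective s hs) e2).trans (Equiv.Set.sumCompl _), ?_⟩
  intro a
  simp

lemma inj_of_delta {m N : ℕ} {s : Fin m → Fin N} {v : Fin m → Fin N → ℂ}
    (h : ∀ a b, v a (s b) = if a = b then 1 else 0) : Function.Injective s := by
  intro a b hab
  by_contra hne
  have h1 := h a a
  rw [hab, h a b] at h1
  simp [hne] at h1

/-- Symmetric matrices with a large kernel. -/
lemma exists_blk {m n N : ℕ} (hN : N = m + n) (M : Fin N → Fin N → ℂ)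
    (hM : ∀ x y, M x y = M y x) (K : Submodule ℂ (Fin N → ℂ))
    (hK : m ≤ Module.finrank ℂ K) (hKM : ∀ v ∈ K, ∀ x, ∑ y, M x y * v y = 0) :
    ∃ (e : Fin m ⊕ Fin n ≃ Fin N) (k : Fin n → Fin m → ℂ) (D : Sym2 (Fin n) → ℂ),
      ∀ x y, M x y = blk k D (e.symm x) (e.symm y) := by
  obtain ⟨s, v, hv, hd⟩ := exists_pivots K m hK
  obtain ⟨e, he⟩ := exists_equiv_extend hN s (inj_of_delta hd)
  refine ⟨e, fun t a => v a (e (.inr t)), blk_of_kernel M hM e _ fun a x => ?_⟩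
  have := hKM _ (hv a) x
  rw [← e.sum_comp, Fintype.sum_sum_type] at this
  simpa [he, hd] using this

/-! ### The three bad families -/

/-- Vector with two prescribed coordinates. -/
def ext2 (c : Fin 2 ⊕ Fin 3 ≃ Fin 5) (α β : ℂ) (w : Fin 3 → ℂ) (i : Fin 5) : ℂ :=
  Sum.elim ![α, β] w (c.symm i)

noncomputable def bad1 (c : Fin 2 ⊕ Fin 3 ≃ Fin 5) (e : Fin 1 ⊕ Fin 9 ≃ Fin 10)
    (p : (Fin 3 → ℂ) × (Fin 3 → ℂ) × (Fin 3 → ℂ) × (Sym2 (Fin 9) → ℂ)) (x y : Fin 10) : ℂ :=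
  PM (ext2 c 0 0 p.1) x y +
    blk (fun t _ => wedgeC (ext2 c 1 0 p.2.1) (ext2 c 0 1 p.2.2.1) (e (.inr t))) p.2.2.2
      (e.symm x) (e.symm y)

noncomputable def bad2 (e : Fin 3 ⊕ Fin 7 ≃ Fin 10)
    (p : (Fin 5 → ℂ) × (Fin 7 → Fin 3 → ℂ) × (Sym2 (Fin 7) → ℂ)) (x y : Fin 10) : ℂ :=
  PM p.1 x y + blk p.2.1 p.2.2 (e.symm x) (e.symm y)

noncomputable def bad3 (i : Fin 5) (e : Fin 4 ⊕ Fin 6 ≃ Fin 10) (e' : Fin 3 ⊕ Fin 1 ≃ Fin 4)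
    (p : (Fin 4 → ℂ) × (Fin 1 → Fin 3 → ℂ) × (Sym2 (Fin 1) → ℂ) × (Fin 4 → Fin 6 → ℂ) ×
      (Sym2 (Fin 6) → ℂ)) (x y : Fin 10) : ℂ :=
  blk3 (fun t a => starVec i (i.insertNth (α := fun _ => ℂ) 1 p.1) a (e (.inr t)))
    (fun a b => blk p.2.1 p.2.2.1 (e'.symm a) (e'.symm b)) p.2.2.2.1 p.2.2.2.2
    (e.symm x) (e.symm y)

lemma contDiff_blk {E : Type*} [NormedAddCommGroup E] [NormedSpace ℝ E] {m n : ℕ}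
    (k : E → Fin n → Fin m → ℂ) (D : E → Sym2 (Fin n) → ℂ)
    (hk : ∀ t a, ContDiff ℝ 1 fun p => k p t a) (hD : ∀ z, ContDiff ℝ 1 fun p => D p z)
    (x y : Fin m ⊕ Fin n) : ContDiff ℝ 1 fun p => blk (k p) (D p) x y := by
  rcases x with a | t <;> rcases y with b | t' <;> simp only [blk] <;> fun_prop

lemma contDiff_blk3 {E : Type*} [NormedAddCommGroup E] [NormedSpace ℝ E] {m n : ℕ}
    (k : E → Fin n → Fin m → ℂ) (G : E → Fin m → Fin m → ℂ) (B : E → Fin m → Fin n → ℂ)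
    (D : E → Sym2 (Fin n) → ℂ)
    (hk : ∀ t a, ContDiff ℝ 1 fun p => k p t a) (hG : ∀ t a, ContDiff ℝ 1 fun p => G p t a)
    (hB : ∀ t a, ContDiff ℝ 1 fun p => B p t a) (hD : ∀ z, ContDiff ℝ 1 fun p => D p z)
    (x y : Fin m ⊕ Fin n) : ContDiff ℝ 1 fun p => blk3 (k p) (G p) (B p) (D p) x y := by
  rcases x with a | t <;> rcases y with b | t' <;> simp only [blk3] <;> fun_prop

lemma contDiff_PM {E : Type*} [NormedAddCommGroup E] [NormedSpace ℝ E]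
    (u : E → Fin 5 → ℂ) (hu : ∀ i, ContDiff ℝ 1 fun p => u p i) (x y : Fin 10) :
    ContDiff ℝ 1 fun p => PM (u p) x y := by
  fin_cases x <;> fin_cases y <;>
    first
    | exact contDiff_const
    | exact hu _
    | exact (hu _).neg

lemma contDiff_ext2 {E : Type*} [NormedAddCommGroup E] [NormedSpace ℝ E]
    (c : Fin 2 ⊕ Fin 3 ≃ Fin 5) (α β : ℂ) (w : E → Fin 3 → ℂ)
    (hw : ∀ i, ContDiff ℝ 1 fun p => w p i) (i : Fin 5) :
    ContDiff ℝ 1 fun p => ext2 c α β (w p) i := by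
  unfold ext2
  rcases c.symm i with a | t
  · simpa using contDiff_const
  · simpa using hw t

lemma contDiff_wedgeC {E : Type*} [NormedAddCommGroup E] [NormedSpace ℝ E]
    (y z : E → Fin 5 → ℂ) (hy : ∀ i, ContDiff ℝ 1 fun p => y p i)
    (hz : ∀ i, ContDiff ℝ 1 fun p => z p i) (k : Fin 10) :
    ContDiff ℝ 1 fun p => wedgeC (y p) (z p) k := by
  unfold wedgeC
  fun_prop

lemma contDiff_bad1 (c : Fin 2 ⊕ Fin 3 ≃ Fin 5) (e : Fin 1 ⊕ Fin 9 ≃ Fin 10) (x y : Fin 10) :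
    ContDiff ℝ 1 fun p => bad1 c e p x y := by
  unfold bad1
  refine (contDiff_PM _ (contDiff_ext2 c 0 0 _ fun i => ?_) x y).add
    (contDiff_blk _ _ (fun t a => contDiff_wedgeC _ _ (contDiff_ext2 c 1 0 _ fun i => ?_)
      (contDiff_ext2 c 0 1 _ fun i => ?_) _) (fun z => ?_) _ _) <;> fun_prop

lemma contDiff_bad2 (e : Fin 3 ⊕ Fin 7 ≃ Fin 10) (x y : Fin 10) :
    ContDiff ℝ 1 fun p => bad2 e p x y := by
  unfold bad2
  refine (contDiff_PM _ (fun i => ?_) x y).add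
    (contDiff_blk _ _ (fun t a => ?_) (fun z => ?_) _ _) <;> fun_prop

lemma contDiff_bad3 (i : Fin 5) (e : Fin 4 ⊕ Fin 6 ≃ Fin 10) (e' : Fin 3 ⊕ Fin 1 ≃ Fin 4)
    (x y : Fin 10) : ContDiff ℝ 1 fun p => bad3 i e e' p x y := by
  unfold bad3
  refine contDiff_blk3 _ _ _ _ (fun t a => ?_) (fun a b => contDiff_blk _ _ ?_ ?_ _ _) ?_ ?_ _ _
  · have hu : ∀ j, ContDiff ℝ 1 fun p : (Fin 4 → ℂ) × (Fin 1 → Fin 3 → ℂ) × (Sym2 (Fin 1) → ℂ) ×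
        (Fin 4 → Fin 6 → ℂ) × (Sym2 (Fin 6) → ℂ) =>
        i.insertNth (α := fun _ => ℂ) 1 p.1 j := by
      intro j
      rcases Fin.eq_self_or_eq_succAbove i j with rfl | ⟨j, rfl⟩
      · simpa using contDiff_const
      · simp only [Fin.insertNth_apply_succAbove]; fun_prop
    unfold starVec
    split_ifs
    · exact contDiff_wedgeC _ (fun _ => Pi.single (i.succAbove a) 1) hu (fun _ => contDiff_const) _
    · exact contDiff_wedgeC (fun _ => Pi.single (i.succAbove a) 1) _ (fun _ => contDiff_const) hu _
  all_goals intros; fun_prop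

/-- Restricting a matrix to unordered pairs. -/
noncomputable def toSym (M : Fin 10 → Fin 10 → ℂ) (z : Sym2 (Fin 10)) : ℂ :=
  M (Quot.out z).1 (Quot.out z).2

lemma toSym_eq (f : Sym2 (Fin 10) → ℂ) : toSym (fun x y => f s(x, y)) = f := by
  funext z
  exact congrArg f (Quot.out_eq z)

lemma dimH_bad {E : Type*} [NormedAddCommGroup E] [NormedSpace ℝ E] [FiniteDimensional ℝ E]
    (g : E → Fin 10 → Fin 10 → ℂ) (hg : ∀ x y, ContDiff ℝ 1 fun p => g p x y)
    (hE : Module.finrank ℝ E ≤ 108) : dimH (Set.range fun p => toSym (g p)) ≤ 108 := by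
  have h : ContDiff ℝ 1 fun p => toSym (g p) := contDiff_pi.2 fun z => hg _ _
  refine h.dimH_range_le.trans ?_
  exact_mod_cast hE

/-- A generic symmetric matrix lies in none of the bad families. -/
theorem exists_generic : ∃ Q : Fin 10 → Fin 10 → ℂ, (∀ x y, Q x y = Q y x) ∧
    (∀ c e p, bad1 c e p ≠ Q) ∧ (∀ e p, bad2 e p ≠ Q) ∧ ∀ i e e' p, bad3 i e e' p ≠ Q := by
  let B1 := ⋃ c, ⋃ e, Set.range fun p => toSym (bad1 c e p)
  let B2 := ⋃ e, Set.range fun p => toSym (bad2 e p)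
  let B3 := ⋃ i, ⋃ e, ⋃ e', Set.range fun p => toSym (bad3 i e e' p)
  have h1 : dimH B1 ≤ 108 := by
    simp only [B1, dimH_iUnion, iSup_le_iff]
    intro c e
    refine dimH_bad _ (contDiff_bad1 c e) ?_
    rw [finrank_real_of_complex]
    simp [Sym2.card, Nat.choose, Module.finrank_pi_fintype]
  have h2 : dimH B2 ≤ 108 := by
    simp only [B2, dimH_iUnion, iSup_le_iff]
    intro e
    refine dimH_bad _ (contDiff_bad2 e) ?_
    rw [finrank_real_of_complex]
    simp [Sym2.card, Nat.choose, Module.finrank_pi_fintype]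
  have h3 : dimH B3 ≤ 108 := by
    simp only [B3, dimH_iUnion, iSup_le_iff]
    intro i e e'
    refine dimH_bad _ (contDiff_bad3 i e e') ?_
    rw [finrank_real_of_complex]
    simp [Sym2.card, Nat.choose, Module.finrank_pi_fintype]
  have h : dimH (B1 ∪ B2 ∪ B3) < Module.finrank ℝ (Sym2 (Fin 10) → ℂ) := by
    rw [dimH_union, dimH_union]
    refine (max_le (max_le h1 h2) h3).trans_lt ?_
    rw [finrank_real_of_complex]
    simp only [Module.finrank_fintype_fun_eq_card, Sym2.card, Fintype.card_fin]
    norm_num [Nat.choose]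
  obtain ⟨f, hf⟩ := (dense_compl_of_dimH_lt_finrank h).nonempty
  simp only [Set.mem_compl_iff, Set.mem_union, not_or, B1, B2, B3, Set.mem_iUnion, Set.mem_range,
    not_exists] at hf
  obtain ⟨⟨hf1, hf2⟩, hf3⟩ := hf
  refine ⟨fun x y => f s(x, y), fun x y => congrArg f Sym2.eq_swap, ?_, ?_, ?_⟩
  · intro c e p hp
    exact hf1 c e p (by rw [hp, toSym_eq])
  · intro e p hp
    exact hf2 e p (by rw [hp, toSym_eq])
  · intro i e e' p hp
    exact hf3 i e e' p (by rw [hp, toSym_eq])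

/-! ### Consequences of genericity -/

lemma good1 {Q : Fin 10 → Fin 10 → ℂ} (hQ : ∀ x y, Q x y = Q y x)
    (hb : ∀ c e p, bad1 c e p ≠ Q) (c : Fin 2 ⊕ Fin 3 ≃ Fin 5) (w₁ w₂ w₃ : Fin 3 → ℂ)
    (k₀ : Fin 10) (hk : wedgeC (ext2 c 1 0 w₂) (ext2 c 0 1 w₃) k₀ = 1)
    (h : ∀ x, ∑ y, Q x y * wedgeC (ext2 c 1 0 w₂) (ext2 c 0 1 w₃) y =
      ∑ y, PM (ext2 c 0 0 w₁) x y * wedgeC (ext2 c 1 0 w₂) (ext2 c 0 1 w₃) y) : False := by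
  obtain ⟨e, he⟩ := exists_equiv_extend (m := 1) (n := 9) (N := 10) rfl (fun _ => k₀)
    (fun a b _ => Subsingleton.elim a b)
  obtain ⟨D, hD⟩ := blk_of_kernel (fun x y => Q x y - PM (ext2 c 0 0 w₁) x y)
    (fun x y => by simp only [hQ x y, PM_symm _ x y]) e
    (fun t _ => wedgeC (ext2 c 1 0 w₂) (ext2 c 0 1 w₃) (e (.inr t))) (fun a x => by
      have h1 := sub_eq_zero.2 (h x)
      rw [← Finset.sum_sub_distrib, ← e.sum_comp, Fintype.sum_sum_type] at h1
      simp only [he, hk, Finset.univ_unique, Finset.sum_const, Finset.card_singleton,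
        one_smul, mul_one, ← sub_mul] at h1
      rw [he]
      exact h1)
  refine hb c e (w₁, w₂, w₃, D) ?_
  funext x y
  have := hD x y
  simp only [bad1]
  rw [← this]
  ring

lemma good2 {Q : Fin 10 → Fin 10 → ℂ} (hQ : ∀ x y, Q x y = Q y x)
    (hb : ∀ e p, bad2 e p ≠ Q) (u : Fin 5 → ℂ) (K : Submodule ℂ (Fin 10 → ℂ))
    (hK : 3 ≤ Module.finrank ℂ K)
    (h : ∀ v ∈ K, ∀ x, ∑ y, Q x y * v y = ∑ y, PM u x y * v y) : False := by
  obtain ⟨e, k, D, hD⟩ := exists_blk (m := 3) (n := 7) (N := 10) rfl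
    (fun x y => Q x y - PM u x y) (fun x y => by simp only [hQ x y, PM_symm _ x y]) K hK
    (fun v hv x => by
      simp only [sub_mul, Finset.sum_sub_distrib]
      exact sub_eq_zero.2 (h v hv x))
  refine hb e (u, k, D) ?_
  funext x y
  have := hD x y
  simp only [bad2]
  rw [← this]
  ring

lemma starIdx_injective (i : Fin 5) : Function.Injective (starIdx i) := by
  revert i; decide

lemma starVec_starIdx (i : Fin 5) (u : Fin 5 → ℂ) (hu : u i = 1) (a b : Fin 4) :
    starVec i u a (starIdx i b) = if a = b then 1 else 0 := by
  have hd : ∀ i : Fin 5, ∀ b : Fin 4, (i < i.succAbove b ∧ pairI (starIdx i b) = i ∧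
      pairJ (starIdx i b) = i.succAbove b) ∨ (¬ i < i.succAbove b ∧
      pairJ (starIdx i b) = i ∧ pairI (starIdx i b) = i.succAbove b) := by decide
  have hne : ∀ c : Fin 4, i ≠ i.succAbove c := fun c => (Fin.succAbove_ne i c).symm
  have hab : (i.succAbove b = i.succAbove a) ↔ a = b := by
    rw [Fin.succAbove_right_inj]; exact eq_comm
  by_cases h : a = b
  · subst h
    rcases hd i a with ⟨h1, h2, h3⟩ | ⟨h1, h2, h3⟩ <;>
      simp [starVec, wedgeC, h1, h2, h3, hu, hne, Pi.single_apply]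
  · have h' : ¬ i.succAbove b = i.succAbove a := fun h2 => h (hab.1 h2)
    rcases hd i b with ⟨h1, h2, h3⟩ | ⟨h1, h2, h3⟩ <;>
      simp [starVec, wedgeC, h2, h3, hne, Pi.single_apply, h, h']

lemma star_expand (i : Fin 5) (u : Fin 5 → ℂ) (hu : u i = 1) (x : Fin 10 → ℂ)
    (h : ∀ k, ∑ l, PM u k l * x l = 0) (k : Fin 10) :
    x k = ∑ a, x (starIdx i a) * starVec i u a k := by
  have h0 := h 0
  have h1 := h 1
  have h2 := h 2
  have h3 := h 3
  have h4 := h 4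
  have h5 := h 5
  have h6 := h 6
  have h7 := h 7
  have h8 := h 8
  have h9 := h 9
  simp [PM, Fin.sum_univ_succ] at h0 h1 h2 h3 h4 h5 h6 h7 h8 h9
  clear h
  fin_cases i <;> fin_cases k <;>
    simp [starVec, starIdx, wedgeC, pairI, pairJ, Fin.succAbove, Pi.single_apply,
      Fin.sum_univ_succ] at hu ⊢ <;> (try simp only [hu] at *) <;> grind

lemma good3 {Q : Fin 10 → Fin 10 → ℂ} (hQ : ∀ x y, Q x y = Q y x)
    (hb : ∀ i e e' p, bad3 i e e' p ≠ Q) (i : Fin 5) (u : Fin 5 → ℂ) (hu : u i = 1)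
    (K : Submodule ℂ (Fin 10 → ℂ)) (hK : 3 ≤ Module.finrank ℂ K)
    (h1 : ∀ v ∈ K, ∀ k, ∑ l, PM u k l * v l = 0)
    (h2 : ∀ v ∈ K, ∀ j, ∑ k, wedgeC u (Pi.single j 1) k * ∑ l, Q k l * v l = 0) : False := by
  obtain ⟨e, he⟩ := exists_equiv_extend (m := 4) (n := 6) (N := 10) rfl (starIdx i)
    (starIdx_injective i)
  obtain ⟨B, D, hBD⟩ := blk3_of_restrict Q hQ e (starVec i u)
    (fun a b => by rw [he]; exact starVec_starIdx i u hu a b)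
  set G : Fin 4 → Fin 4 → ℂ := fun a b => ∑ x, ∑ y, starVec i u a x * Q x y * starVec i u b y
    with hG
  have hGs : ∀ a b, G a b = G b a := by
    intro a b
    simp only [hG]
    rw [Finset.sum_comm]
    refine Finset.sum_congr rfl fun x _ => Finset.sum_congr rfl fun y _ => ?_
    rw [hQ]; ring
  let π : (Fin 10 → ℂ) →ₗ[ℂ] (Fin 4 → ℂ) := LinearMap.funLeft ℂ ℂ (starIdx i)
  have hπ : ∀ v ∈ K, v = fun k => ∑ a, π v a * starVec i u a k := fun v hv =>
    funext fun k => star_expand i u hu v (h1 v hv) k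
  have hinj : Function.Injective (π.comp K.subtype) := by
    intro v w hvw
    apply Subtype.ext
    rw [hπ v v.2, hπ w w.2]
    have : π v = π w := hvw
    rw [this]
  have hK' : 3 ≤ Module.finrank ℂ (LinearMap.range (π.comp K.subtype)) := by
    rw [LinearMap.finrank_range_of_inj hinj]; exact hK
  obtain ⟨e', k', D', hD'⟩ := exists_blk (m := 3) (n := 1) (N := 4) rfl G hGs _ hK' (by
    rintro _ ⟨⟨v, hv⟩, rfl⟩ a
    have e1 : ∑ k, starVec i u a k * ∑ l, Q k l * v l = 0 := by
      have := h2 v hv (i.succAbove a)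
      unfold starVec
      split_ifs
      · exact this
      · rw [← neg_eq_zero, ← this, ← Finset.sum_neg_distrib]
        refine Finset.sum_congr rfl fun k _ => ?_
        simp only [wedgeC]; ring
    have e2 : ∀ l, v l = ∑ b, π v b * starVec i u b l := fun l => congrFun (hπ v hv) l
    rw [← e1]
    change ∑ b, G a b * π v b = _
    simp only [hG, Finset.sum_mul]
    rw [Finset.sum_comm]
    refine Finset.sum_congr rfl fun k _ => ?_
    rw [Finset.mul_sum, Finset.sum_comm]
    refine Finset.sum_congr rfl fun l _ => ?_
    conv_rhs => rw [e2 l]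
    rw [Finset.mul_sum, Finset.mul_sum]
    refine Finset.sum_congr rfl fun b _ => ?_
    ring)
  refine hb i e e' (fun j => u (i.succAbove j), k', D', B, D) ?_
  have hins : i.insertNth (α := fun _ => ℂ) 1 (fun j => u (i.succAbove j)) = u := by
    funext j
    rcases Fin.eq_self_or_eq_succAbove i j with rfl | ⟨j, rfl⟩ <;> simp [hu]
  funext x y
  simp only [bad3, hins]
  rw [hBD x y]
  have hG' : G = fun a b => blk k' D' (e'.symm a) (e'.symm b) := funext fun a => funext fun b => hD' a b
  rw [hG']

/-! ### Dual triples -/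

def triA : Fin 10 → Fin 5 := ![2, 1, 1, 1, 0, 0, 0, 0, 0, 0]
def triB : Fin 10 → Fin 5 := ![3, 3, 2, 2, 3, 2, 2, 1, 1, 1]
def triC : Fin 10 → Fin 5 := ![4, 4, 4, 3, 4, 4, 3, 4, 3, 2]
def triS : Fin 10 → ℤ := ![1, -1, 1, -1, 1, -1, 1, 1, -1, 1]

lemma coord_eqs (p : Fin 6 → Fin 6 → Fin 6 → ℂ) (v : Fin 6 → ℂ)
    (hp : ∀ a b c d, v a * p b c d - v b * p a c d + v c * p a b d - v d * p a b c = 0)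
    (x q : Fin 10 → ℂ) (hx : ∀ k, p 0 (pairI k).succ (pairJ k).succ = x k)
    (hq : ∀ k, p (triA k).succ (triB k).succ (triC k).succ = triS k * q k) :
    (∀ k, v 0 * q k = ∑ l, PM (fun i => v i.succ) k l * x l) ∧
    ∀ j, ∑ k, wedgeC (fun i => v i.succ) (Pi.single j 1) k * q k = 0 := by
  have hq' : ∀ k, q k = triS k * p (triA k).succ (triB k).succ (triC k).succ := by
    intro k
    rw [hq, ← mul_assoc]
    fin_cases k <;> simp [triS]
  constructor
  · intro k
    have h := hp 0 (triA k).succ (triB k).succ (triC k).succ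
    rw [hq']
    simp only [← hx]
    fin_cases k <;>
      simp [triA, triB, triC, triS, PM, pairI, pairJ, Fin.sum_univ_succ] at h ⊢ <;>
      first
      | linear_combination h
      | linear_combination -h
  · intro j
    have h : ∀ a b c d : Fin 5, _ := fun a b c d => hp a.succ b.succ c.succ d.succ
    simp only [hq']
    have h0 := h 1 2 3 4
    have h1 := h 0 2 3 4
    have h2 := h 0 1 3 4
    have h3 := h 0 1 2 4
    have h4 := h 0 1 2 3
    clear h hp hq hx hq'
    fin_cases j <;>
      simp [triA, triB, triC, triS, wedgeC, pairI, pairJ, Fin.sum_univ_succ,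
        Pi.single_apply] at h0 h1 h2 h3 h4 ⊢ <;>
      first
      | linear_combination h0
      | linear_combination -h0
      | linear_combination h1
      | linear_combination -h1
      | linear_combination h2
      | linear_combination -h2
      | linear_combination h3
      | linear_combination -h3
      | linear_combination h4
      | linear_combination -h4

/-! ### Decomposable vectors -/

lemma ext2_self (c : Fin 2 ⊕ Fin 3 ≃ Fin 5) (y : Fin 5 → ℂ) :
    ext2 c (y (c (.inl 0))) (y (c (.inl 1))) (fun t => y (c (.inr t))) = y := by
  funext i
  obtain ⟨i, rfl⟩ := c.surjective i
  simp only [ext2, Equiv.symm_apply_apply]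
  rcases i with i | i
  · fin_cases i <;> rfl
  · rfl

/-- The `3 × 3` minor of `B` on columns `a, b, c`. -/
noncomputable def minor (B : Matrix (Fin 3) (Fin 6) ℂ) (a b c : Fin 6) : ℂ :=
  (B.submatrix id ![a, b, c]).det

lemma minor_eq (B : Matrix (Fin 3) (Fin 6) ℂ) (a b c : Fin 6) :
    minor B a b c = B 0 a * B 1 b * B 2 c - B 0 a * B 1 c * B 2 b - B 0 b * B 1 a * B 2 c
      + B 0 b * B 1 c * B 2 a + B 0 c * B 1 a * B 2 b - B 0 c * B 1 b * B 2 a := by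
  simp [minor, Matrix.det_fin_three]

lemma minor_mul (N : Matrix (Fin 3) (Fin 3) ℂ) (B : Matrix (Fin 3) (Fin 6) ℂ) (a b c : Fin 6) :
    minor (N * B) a b c = N.det * minor B a b c := by
  unfold minor
  rw [← Matrix.det_mul]
  rfl

lemma tri_minor (u y z : Fin 5 → ℂ) (k : Fin 10) :
    (triS k : ℂ) * (u (triA k) * y (triB k) * z (triC k) - u (triA k) * y (triC k) * z (triB k)
      - u (triB k) * y (triA k) * z (triC k) + u (triB k) * y (triC k) * z (triA k)
      + u (triC k) * y (triA k) * z (triB k) - u (triC k) * y (triB k) * z (triA k)) =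
    ∑ l, PM u k l * wedgeC y z l := by
  fin_cases k <;>
    simp [triA, triB, triC, triS, PM, wedgeC, pairI, pairJ, Fin.sum_univ_succ] <;> ring

lemma triS_sq (k : Fin 10) : (triS k : ℂ) * (triS k : ℂ) = 1 := by
  have : ∀ k, triS k * triS k = 1 := by decide
  exact_mod_cast this k

lemma no_decomp {Q : Fin 10 → Fin 10 → ℂ} (hQ : ∀ x y, Q x y = Q y x)
    (hb : ∀ c e p, bad1 c e p ≠ Q) (B : Matrix (Fin 3) (Fin 6) ℂ) (x : Fin 10 → ℂ)
    (hx : ∀ k, minor B 0 (pairI k).succ (pairJ k).succ = x k)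
    (hq : ∀ k, minor B (triA k).succ (triB k).succ (triC k).succ = triS k * ∑ l, Q k l * x l) :
    x = 0 := by
  by_contra hne
  obtain ⟨k₀, hk₀⟩ : ∃ k, x k ≠ 0 := by
    by_contra! h
    exact hne (funext h)
  set N : Matrix (Fin 3) (Fin 3) ℂ := B.submatrix id ![0, (pairI k₀).succ, (pairJ k₀).succ] with hN
  have hdet : N.det = x k₀ := hx k₀
  have hunit : IsUnit N.det := by rw [hdet]; exact hk₀.isUnit
  set B' := N⁻¹ * B with hB'
  have hdet' : N⁻¹.det = (x k₀)⁻¹ := by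
    rw [Matrix.det_nonsing_inv, hdet, Ring.inverse_eq_inv']
  have hid : B'.submatrix id ![0, (pairI k₀).succ, (pairJ k₀).succ] = 1 := by
    have : B'.submatrix id ![0, (pairI k₀).succ, (pairJ k₀).succ] = N⁻¹ * N := rfl
    rw [this, Matrix.nonsing_inv_mul _ hunit]
  have hent : ∀ r s, B' r ((![0, (pairI k₀).succ, (pairJ k₀).succ] : Fin 3 → Fin 6) s) =
      (1 : Matrix (Fin 3) (Fin 3) ℂ) r s := fun r s => congrFun (congrFun hid r) s
  have h00 := hent 0 0
  have h01 := hent 0 1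
  have h02 := hent 0 2
  have h10 := hent 1 0
  have h11 := hent 1 1
  have h12 := hent 1 2
  have h20 := hent 2 0
  have h21 := hent 2 1
  have h22 := hent 2 2
  simp at h00 h01 h02 h10 h11 h12 h20 h21 h22
  obtain ⟨c, hc⟩ := exists_equiv_extend (m := 2) (n := 3) (N := 5) rfl ![pairI k₀, pairJ k₀] (by
    have hp : ∀ k, pairI k ≠ pairJ k := by decide
    intro a b hab
    fin_cases a <;> fin_cases b <;> simp at hab ⊢
    · exact hp _ hab
    · exact hp _ hab.symm)
  have hc0 : c (.inl 0) = pairI k₀ := hc 0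
  have hc1 : c (.inl 1) = pairJ k₀ := hc 1
  set u : Fin 5 → ℂ := fun i => B' 0 i.succ with hu
  set y : Fin 5 → ℂ := fun i => B' 1 i.succ with hy
  set z : Fin 5 → ℂ := fun i => B' 2 i.succ with hz
  have eu : ext2 c 0 0 (fun t => u (c (.inr t))) = u := by
    conv_rhs => rw [← ext2_self c u]
    rw [hc0, hc1]; simp only [hu, h01, h02]
  have ey : ext2 c 1 0 (fun t => y (c (.inr t))) = y := by
    conv_rhs => rw [← ext2_self c y]
    rw [hc0, hc1]; simp only [hy, h11, h12]
  have ez : ext2 c 0 1 (fun t => z (c (.inr t))) = z := by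
    conv_rhs => rw [← ext2_self c z]
    rw [hc0, hc1]; simp only [hz, h21, h22]
  have hw : ∀ k, wedgeC y z k = (x k₀)⁻¹ * x k := by
    intro k
    rw [← hx k, ← hdet', ← minor_mul, minor_eq, ← hB', h00, h10, h20]
    simp only [wedgeC, hy, hz]
    ring
  refine good1 hQ hb c (fun t => u (c (.inr t))) (fun t => y (c (.inr t)))
    (fun t => z (c (.inr t))) k₀ ?_ ?_
  · rw [ey, ez, hw, inv_mul_cancel₀ hk₀]
  · intro k
    rw [eu, ey, ez, ← tri_minor]
    have h3 := minor_mul N⁻¹ B (triA k).succ (triB k).succ (triC k).succ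
    rw [hq, hdet', minor_eq, ← hB'] at h3
    change _ = (triS k : ℂ) * (B' 0 _ * B' 1 _ * B' 2 _ - B' 0 _ * B' 1 _ * B' 2 _
      - B' 0 _ * B' 1 _ * B' 2 _ + B' 0 _ * B' 1 _ * B' 2 _ + B' 0 _ * B' 1 _ * B' 2 _
      - B' 0 _ * B' 1 _ * B' 2 _)
    rw [h3]
    simp only [hw]
    have : ∑ l, Q k l * ((x k₀)⁻¹ * x l) = (x k₀)⁻¹ * ∑ l, Q k l * x l := by
      rw [Finset.mul_sum]
      exact Finset.sum_congr rfl fun l _ => by ring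
    rw [this]
    linear_combination (-(x k₀)⁻¹ * ∑ l, Q k l * x l) * triS_sq k

/-! ### Contractions -/

section Contr

variable {V : Type*} [AddCommGroup V] [Module ℂ V]

/-- Contraction by a linear form. -/
noncomputable def ctr (d : Module.Dual ℂ V) :
    ExteriorAlgebra ℂ V →ₗ[ℂ] ExteriorAlgebra ℂ V :=
  CliffordAlgebra.contractLeft (Q := (0 : QuadraticForm ℂ V)) d

lemma ctr_mul (d : Module.Dual ℂ V) (v : V) (y : ExteriorAlgebra ℂ V) :
    ctr d (ι ℂ v * y) = d v • y - ι ℂ v * ctr d y :=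
  CliffordAlgebra.contractLeft_ι_mul (Q := (0 : QuadraticForm ℂ V)) d v y

lemma ctr_ι (d : Module.Dual ℂ V) (v : V) :
    ctr d (ι ℂ v) = algebraMap ℂ _ (d v) :=
  CliffordAlgebra.contractLeft_ι (Q := (0 : QuadraticForm ℂ V)) d v

lemma ctr_algebraMap (d : Module.Dual ℂ V) (r : ℂ) :
    ctr d (algebraMap ℂ (ExteriorAlgebra ℂ V) r) = 0 :=
  CliffordAlgebra.contractLeft_algebraMap (Q := (0 : QuadraticForm ℂ V)) d r

/-- Evaluation of three linear forms on an element of the exterior algebra. -/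
noncomputable def pf (a b c : Module.Dual ℂ V) : ExteriorAlgebra ℂ V →ₗ[ℂ] ℂ :=
  (algebraMapInv (R := ℂ) (M := V)).toLinearMap ∘ₗ ctr c ∘ₗ ctr b ∘ₗ ctr a

lemma pf_prod (a b c : Module.Dual ℂ V) (v₀ v₁ v₂ : V) :
    pf a b c (ι ℂ v₀ * (ι ℂ v₁ * ι ℂ v₂)) =
      a v₀ * b v₁ * c v₂ - a v₀ * c v₁ * b v₂ - b v₀ * a v₁ * c v₂
      + c v₀ * a v₁ * b v₂ + b v₀ * c v₁ * a v₂ - c v₀ * b v₁ * a v₂ := by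
  simp only [pf, LinearMap.comp_apply, AlgHom.toLinearMap_apply, ctr_mul, ctr_ι, map_sub,
    map_smul, Algebra.algebraMap_eq_smul_one, mul_sub, mul_smul_comm, mul_one,
    smul_eq_mul, map_one]
  ring

lemma pf_four (v : V) (y : ExteriorAlgebra ℂ V) (h : ι ℂ v * y = 0)
    (a b c d : Module.Dual ℂ V) :
    a v * pf b c d y - b v * pf a c d y + c v * pf a b d y - d v * pf a b c y = 0 := by
  have h1 : algebraMapInv (ctr d (ctr c (ctr b (ctr a (ι ℂ v * y))))) = 0 := by
    rw [h]; simp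
  have h0 : algebraMapInv (R := ℂ) (ι ℂ v) = 0 := by
    simp [algebraMapInv]
  simp only [ctr_mul, map_sub, map_smul, map_mul, h0, zero_mul, sub_zero, smul_eq_mul] at h1
  simp only [pf, LinearMap.comp_apply, AlgHom.toLinearMap_apply]
  linear_combination h1

end Contr

/-! ### The Lagrangian attached to a symmetric matrix -/

section Lagr

variable {V : Type*} [AddCommGroup V] [Module ℂ V]

/-- `e₀ ∧ e_i ∧ e_j`. -/
noncomputable def bE (b : Fin 6 → V) (k : Fin 10) : ExteriorAlgebra ℂ V :=
  ι ℂ (b 0) * (ι ℂ (b (pairI k).succ) * ι ℂ (b (pairJ k).succ))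

/-- The dual trivector, without sign. -/
noncomputable def bT (b : Fin 6 → V) (k : Fin 10) : ExteriorAlgebra ℂ V :=
  ι ℂ (b (triA k).succ) * (ι ℂ (b (triB k).succ) * ι ℂ (b (triC k).succ))

/-- The graph of `Q`. -/
noncomputable def elem (b : Fin 6 → V) (Q : Fin 10 → Fin 10 → ℂ) :
    (Fin 10 → ℂ) →ₗ[ℂ] ExteriorAlgebra ℂ V :=
  ∑ k, (LinearMap.proj k : (Fin 10 → ℂ) →ₗ[ℂ] ℂ).smulRight (bE b k) +
  ∑ k, (∑ l, Q k l • (LinearMap.proj l : (Fin 10 → ℂ) →ₗ[ℂ] ℂ)).smulRight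
    ((triS k : ℂ) • bT b k)

lemma elem_apply (b : Fin 6 → V) (Q : Fin 10 → Fin 10 → ℂ) (x : Fin 10 → ℂ) :
    elem b Q x = ∑ k, x k • bE b k + ∑ k, (∑ l, Q k l * x l) • ((triS k : ℂ) • bT b k) := by
  simp [elem, LinearMap.sum_apply]

/-- Integer Kronecker delta. -/
def dl (i j : Fin 6) : ℤ := if i = j then 1 else 0

/-- Integer determinant of deltas. -/
def dt (a b c i j k : Fin 6) : ℤ :=
  dl a i * dl b j * dl c k - dl a i * dl c j * dl b k - dl b i * dl a j * dl c k
      + dl c i * dl a j * dl b k + dl b i * dl c j * dl a k - dl c i * dl b j * dl a k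

lemma pf_basis (b : Module.Basis (Fin 6) ℂ V) (a₁ a₂ a₃ i j k : Fin 6) :
    pf (b.coord a₁) (b.coord a₂) (b.coord a₃) (ι ℂ (b i) * (ι ℂ (b j) * ι ℂ (b k))) =
      (dt a₁ a₂ a₃ i j k : ℂ) := by
  have h : ∀ a i, b.coord a (b i) = (dl a i : ℂ) := by
    intro a i
    simp [dl, Finsupp.single_apply, eq_comm]
  rw [pf_prod]
  simp only [h, dt]
  push_cast
  ring

lemma pf_pair (b : Module.Basis (Fin 6) ℂ V) (Q : Fin 10 → Fin 10 → ℂ) (x : Fin 10 → ℂ)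
    (k : Fin 10) :
    pf (b.coord 0) (b.coord (pairI k).succ) (b.coord (pairJ k).succ) (elem b Q x) = x k := by
  have h1 : ∀ k l, dt 0 (pairI k).succ (pairJ k).succ 0 (pairI l).succ (pairJ l).succ =
      if l = k then 1 else 0 := by decide
  have h2 : ∀ k l, dt 0 (pairI k).succ (pairJ k).succ (triA l).succ (triB l).succ (triC l).succ =
      0 := by decide
  rw [elem_apply]
  simp [bE, bT, pf_basis, h1, h2]

lemma pf_tri (b : Module.Basis (Fin 6) ℂ V) (Q : Fin 10 → Fin 10 → ℂ) (x : Fin 10 → ℂ)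
    (k : Fin 10) :
    pf (b.coord (triA k).succ) (b.coord (triB k).succ) (b.coord (triC k).succ) (elem b Q x) =
      triS k * ∑ l, Q k l * x l := by
  have h1 : ∀ k l, dt (triA k).succ (triB k).succ (triC k).succ 0 (pairI l).succ (pairJ l).succ =
      0 := by decide
  have h2 : ∀ k l, dt (triA k).succ (triB k).succ (triC k).succ
      (triA l).succ (triB l).succ (triC l).succ = if l = k then 1 else 0 := by decide
  rw [elem_apply]
  simp [bE, bT, pf_basis, h1, h2]
  ring

lemma elem_injective (b : Module.Basis (Fin 6) ℂ V) (Q : Fin 10 → Fin 10 → ℂ) :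
    Function.Injective (elem b Q) := by
  intro x y h
  funext k
  rw [← pf_pair b Q x k, h, pf_pair]

lemma prod3_mem (v₀ v₁ v₂ : V) : ι ℂ v₀ * (ι ℂ v₁ * ι ℂ v₂) ∈ ⋀[ℂ]^3 V := by
  have : ι ℂ v₀ * (ι ℂ v₁ * ι ℂ v₂) = ιMulti ℂ 3 ![v₀, v₁, v₂] := by
    simp [ιMulti_apply, List.ofFn_succ]
  rw [this]
  exact ιMulti_range ℂ 3 ⟨_, rfl⟩

lemma elem_mem (b : Fin 6 → V) (Q : Fin 10 → Fin 10 → ℂ) (x : Fin 10 → ℂ) :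
    elem b Q x ∈ ⋀[ℂ]^3 V := by
  rw [elem_apply]
  refine Submodule.add_mem _ (Submodule.sum_mem _ fun k _ => ?_)
    (Submodule.sum_mem _ fun k _ => ?_)
  · exact Submodule.smul_mem _ _ (prod3_mem _ _ _)
  · exact Submodule.smul_mem _ _ (Submodule.smul_mem _ _ (prod3_mem _ _ _))

lemma prod6 (v₀ v₁ v₂ v₃ v₄ v₅ : V) :
    (ι ℂ v₀ * (ι ℂ v₁ * ι ℂ v₂)) * (ι ℂ v₃ * (ι ℂ v₄ * ι ℂ v₅)) =
      ιMulti ℂ 6 ![v₀, v₁, v₂, v₃, v₄, v₅] := by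
  simp [ιMulti_apply, List.ofFn_succ, mul_assoc]

lemma prod6_zero (b : Fin 6 → V) (i₀ i₁ i₂ i₃ i₄ i₅ : Fin 6)
    (h : ¬ Function.Injective ![i₀, i₁, i₂, i₃, i₄, i₅]) :
    (ι ℂ (b i₀) * (ι ℂ (b i₁) * ι ℂ (b i₂))) * (ι ℂ (b i₃) * (ι ℂ (b i₄) * ι ℂ (b i₅))) = 0 := by
  rw [prod6]
  apply AlternatingMap.map_eq_zero_of_not_injective
  intro hinj
  apply h
  have : ![b i₀, b i₁, b i₂, b i₃, b i₄, b i₅] = b ∘ ![i₀, i₁, i₂, i₃, i₄, i₅] := by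
    funext j; fin_cases j <;> rfl
  rw [this] at hinj
  exact hinj.of_comp

lemma anti (v w : V) : ι ℂ v * ι ℂ w = -(ι ℂ w * ι ℂ v) :=
  eq_neg_of_add_eq_zero_left (ι_add_mul_swap v w)

lemma anti_left (v w : V) (y : ExteriorAlgebra ℂ V) :
    ι ℂ v * (ι ℂ w * y) = -(ι ℂ w * (ι ℂ v * y)) := by
  rw [← mul_assoc, anti, neg_mul, mul_assoc]

lemma odd_swap (v a b c : V) (y : ExteriorAlgebra ℂ V) :
    ι ℂ v * (ι ℂ a * (ι ℂ b * (ι ℂ c * y))) = -(ι ℂ a * (ι ℂ b * (ι ℂ c * (ι ℂ v * y)))) := by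
  rw [anti_left v a, anti_left v b, anti_left v c]
  simp

lemma swap3 (v₀ v₁ v₂ v₃ v₄ v₅ : V) :
    (ι ℂ v₀ * (ι ℂ v₁ * ι ℂ v₂)) * (ι ℂ v₃ * (ι ℂ v₄ * ι ℂ v₅)) =
      -((ι ℂ v₃ * (ι ℂ v₄ * ι ℂ v₅)) * (ι ℂ v₀ * (ι ℂ v₁ * ι ℂ v₂))) := by
  have h : ∀ y : ExteriorAlgebra ℂ V, ι ℂ v₀ * (ι ℂ v₁ * (ι ℂ v₂ * (ι ℂ v₃ * (ι ℂ v₄ * (ι ℂ v₅ * y))))) =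
      -(ι ℂ v₃ * (ι ℂ v₄ * (ι ℂ v₅ * (ι ℂ v₀ * (ι ℂ v₁ * (ι ℂ v₂ * y)))))) := by
    intro y
    rw [odd_swap v₂, mul_neg, odd_swap v₁, neg_neg, odd_swap v₀]
  simpa [mul_assoc] using h 1

lemma bE_bE (b : Fin 6 → V) (k l : Fin 10) : bE b k * bE b l = 0 := by
  refine prod6_zero b _ _ _ _ _ _ fun h => ?_
  have : (0 : Fin 6) = 3 := h rfl
  exact absurd this (by decide)

lemma bT_bT (b : Fin 6 → V) (k l : Fin 10) : bT b k * bT b l = 0 := by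
  refine prod6_zero b _ _ _ _ _ _ fun h => ?_
  obtain ⟨j, hj⟩ := (Finite.injective_iff_surjective.1 h) 0
  fin_cases j <;> exact Fin.succ_ne_zero _ hj

lemma bE_bT_ne (b : Fin 6 → V) {k l : Fin 10} (hkl : k ≠ l) : bE b k * bT b l = 0 := by
  refine prod6_zero b _ _ _ _ _ _ ?_
  have key : ∀ k l : Fin 10, k ≠ l →
      pairI k = triA l ∨ pairI k = triB l ∨ pairI k = triC l ∨
      pairJ k = triA l ∨ pairJ k = triB l ∨ pairJ k = triC l := by decide
  intro h
  rcases key k l hkl with e | e | e | e | e | e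
  · exact absurd (@h 1 3 (congrArg Fin.succ e)) (by decide)
  · exact absurd (@h 1 4 (congrArg Fin.succ e)) (by decide)
  · exact absurd (@h 1 5 (congrArg Fin.succ e)) (by decide)
  · exact absurd (@h 2 3 (congrArg Fin.succ e)) (by decide)
  · exact absurd (@h 2 4 (congrArg Fin.succ e)) (by decide)
  · exact absurd (@h 2 5 (congrArg Fin.succ e)) (by decide)

lemma bE_bT_self (b : Fin 6 → V) (k : Fin 10) :
    (triS k : ℂ) • (bE b k * bT b k) = bE b 0 * bT b 0 := by
  have h10 := anti (b 2) (b 1)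
  have h20 := anti (b 3) (b 1)
  have h30 := anti (b 4) (b 1)
  have h40 := anti (b 5) (b 1)
  have h21 := anti (b 3) (b 2)
  have h31 := anti (b 4) (b 2)
  have h41 := anti (b 5) (b 2)
  have h32 := anti (b 4) (b 3)
  have h42 := anti (b 5) (b 3)
  have h43 := anti (b 5) (b 4)
  have g10 := anti_left (b 2) (b 1)
  have g20 := anti_left (b 3) (b 1)
  have g30 := anti_left (b 4) (b 1)
  have g40 := anti_left (b 5) (b 1)
  have g21 := anti_left (b 3) (b 2)
  have g31 := anti_left (b 4) (b 2)
  have g41 := anti_left (b 5) (b 2)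
  have g32 := anti_left (b 4) (b 3)
  have g42 := anti_left (b 5) (b 3)
  have g43 := anti_left (b 5) (b 4)
  fin_cases k <;>
    simp [bE, bT, triS, triA, triB, triC, pairI, pairJ, mul_assoc, h10, h20, h30, h40, h21, h31,
      h41, h32, h42, h43, g10, g20, g30, g40, g21, g31, g41, g32, g42, g43]

lemma elem_mul (b : Fin 6 → V) (Q : Fin 10 → Fin 10 → ℂ) (hQ : ∀ x y, Q x y = Q y x)
    (x y : Fin 10 → ℂ) : elem b Q x * elem b Q y = 0 := by
  have h1 : ∀ p q : Fin 10 → ℂ, (∑ k, p k • bE b k) * (∑ k, q k • ((triS k : ℂ) • bT b k)) =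
      (∑ k, p k * q k) • (bE b 0 * bT b 0) := by
    intro p q
    rw [Finset.sum_mul_sum, Finset.sum_smul]
    refine Finset.sum_congr rfl fun k _ => ?_
    rw [Finset.sum_eq_single k]
    · rw [← bE_bT_self b k, smul_mul_smul_comm, mul_smul_comm]
    · intro l _ hl
      rw [smul_mul_smul_comm, mul_smul_comm, bE_bT_ne b hl.symm, smul_zero, smul_zero]
    · simp
  have h2 : ∀ p q : Fin 10 → ℂ, (∑ k, q k • ((triS k : ℂ) • bT b k)) * (∑ k, p k • bE b k) =
      -((∑ k, p k • bE b k) * (∑ k, q k • ((triS k : ℂ) • bT b k))) := by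
    intro p q
    rw [Finset.sum_mul_sum, Finset.sum_mul_sum, Finset.sum_comm, ← Finset.sum_neg_distrib]
    refine Finset.sum_congr rfl fun k _ => ?_
    rw [← Finset.sum_neg_distrib]
    refine Finset.sum_congr rfl fun l _ => ?_
    have : bT b l * bE b k = -(bE b k * bT b l) := swap3 _ _ _ _ _ _
    rw [smul_mul_smul_comm, smul_mul_smul_comm, smul_mul_assoc, mul_smul_comm, this, smul_neg,
      smul_neg, mul_comm]
  have h3 : ∀ p q : Fin 10 → ℂ, (∑ k, p k • bE b k) * (∑ k, q k • bE b k) = 0 := by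
    intro p q
    rw [Finset.sum_mul_sum]
    refine Finset.sum_eq_zero fun k _ => Finset.sum_eq_zero fun l _ => ?_
    rw [smul_mul_smul_comm, bE_bE, smul_zero]
  have h4 : ∀ p q : Fin 10 → ℂ, (∑ k, p k • ((triS k : ℂ) • bT b k)) *
      (∑ k, q k • ((triS k : ℂ) • bT b k)) = 0 := by
    intro p q
    rw [Finset.sum_mul_sum]
    refine Finset.sum_eq_zero fun k _ => Finset.sum_eq_zero fun l _ => ?_
    rw [smul_mul_smul_comm, smul_mul_smul_comm, bT_bT, smul_zero, smul_zero]
  rw [elem_apply, elem_apply, mul_add, add_mul, add_mul, h3, h4, h2, h1, h1, zero_add, add_zero,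
    ← neg_smul, ← add_smul]
  have : -∑ k, y k * ∑ l, Q k l * x l + ∑ k, x k * ∑ l, Q k l * y l = 0 := by
    rw [neg_add_eq_zero]
    simp only [Finset.mul_sum]
    rw [Finset.sum_comm]
    refine Finset.sum_congr rfl fun k _ => Finset.sum_congr rfl fun l _ => ?_
    rw [hQ l k]; ring
  rw [this, zero_smul]

end Lagr

lemma PM_smul (t : ℂ) (u : Fin 5 → ℂ) (k l : Fin 10) :
    PM (fun i => t * u i) k l = t * PM u k l := by
  fin_cases k <;> fin_cases l <;> simp [PM]

/-- If `K` has dimension at least `3`, it cannot satisfy the equations of `A ∩ F_v`. -/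
lemma no_three {Q : Fin 10 → Fin 10 → ℂ} (hQ : ∀ x y, Q x y = Q y x)
    (hb2 : ∀ e p, bad2 e p ≠ Q) (hb3 : ∀ i e e' p, bad3 i e e' p ≠ Q)
    (v : Fin 6 → ℂ) (hv : v ≠ 0) (K : Submodule ℂ (Fin 10 → ℂ))
    (h1 : ∀ x ∈ K, ∀ k, v 0 * ∑ l, Q k l * x l = ∑ l, PM (fun i => v i.succ) k l * x l)
    (h2 : ∀ x ∈ K, ∀ j,
      ∑ k, wedgeC (fun i => v i.succ) (Pi.single j 1) k * ∑ l, Q k l * x l = 0) :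
    Module.finrank ℂ K ≤ 2 := by
  by_contra! hK
  by_cases h0 : v 0 = 0
  · obtain ⟨i, hi⟩ : ∃ i : Fin 5, v i.succ ≠ 0 := by
      by_contra! h
      apply hv
      funext j
      refine Fin.cases h0 h j
    refine good3 hQ hb3 i (fun j => (v i.succ)⁻¹ * v j.succ) (inv_mul_cancel₀ hi) K hK ?_ ?_
    · intro x hx k
      have := h1 x hx k
      rw [h0, zero_mul] at this
      simp only [PM_smul, mul_assoc]
      rw [← Finset.mul_sum, ← this, mul_zero]
    · intro x hx j
      have := h2 x hx j
      have e : ∀ k, wedgeC (fun j => (v i.succ)⁻¹ * v j.succ) (Pi.single j 1) k =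
          (v i.succ)⁻¹ * wedgeC (fun j => v j.succ) (Pi.single j 1) k := by
        intro k; simp only [wedgeC]; ring
      simp only [e, mul_assoc]
      rw [← Finset.mul_sum, this, mul_zero]
  · refine good2 hQ hb2 (fun j => (v 0)⁻¹ * v j.succ) K hK ?_
    intro x hx k
    simp only [PM_smul, mul_assoc]
    rw [← Finset.mul_sum, ← h1 x hx k, ← mul_assoc, inv_mul_cancel₀ h0, one_mul]

theorem stmt18 (V : Type*) [AddCommGroup V] [Module ℂ V] [FiniteDimensional ℂ V]
    (hV : Module.finrank ℂ V = 6)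
    (vol : ExteriorAlgebra ℂ V →ₗ[ℂ] ℂ)
    (hvol : Function.Bijective fun x : ⋀[ℂ]^6 V => vol x) :
    ∃ A : Submodule ℂ (ExteriorAlgebra ℂ V),
      A ≤ ⋀[ℂ]^3 V ∧ Module.finrank ℂ A = 10 ∧
      (∀ x ∈ A, ∀ y ∈ A, vol (x * y) = 0) ∧
      (∀ x ∈ A, (∃ v₀ v₁ v₂ : V, x = ι ℂ v₀ * (ι ℂ v₁ * ι ℂ v₂)) → x = 0) ∧
      ∀ v : V, v ≠ 0 → Module.finrank ℂ ↥(A ⊓ Fsub v) ≤ 2 := by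
  obtain ⟨Q, hQ, hb1, hb2, hb3⟩ := exists_generic
  let b : Module.Basis (Fin 6) ℂ V := Module.finBasisOfFinrankEq ℂ V hV
  refine ⟨LinearMap.range (elem b Q), ?_, ?_, ?_, ?_, ?_⟩
  · rintro _ ⟨x, rfl⟩
    exact elem_mem _ _ _
  · rw [LinearMap.finrank_range_of_inj (elem_injective b Q)]
    simp
  · rintro _ ⟨x, rfl⟩ _ ⟨y, rfl⟩
    rw [elem_mul b Q hQ, map_zero]
  · rintro _ ⟨x, rfl⟩ ⟨v₀, v₁, v₂, h⟩
    have hm : ∀ a₁ a₂ a₃, minor (Matrix.of fun r a => b.coord a (![v₀, v₁, v₂] r)) a₁ a₂ a₃ =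
        pf (b.coord a₁) (b.coord a₂) (b.coord a₃) (elem b Q x) := by
      intro a₁ a₂ a₃
      rw [h, pf_prod, minor_eq]
      simp
      ring
    have := no_decomp hQ hb1 (Matrix.of fun r a => b.coord a (![v₀, v₁, v₂] r)) x
      (fun k => by rw [hm, pf_pair]) (fun k => by rw [hm, pf_tri])
    rw [this, map_zero]
  · intro v hv
    have hmap : LinearMap.range (elem b Q) ⊓ Fsub v =
        ((Fsub v).comap (elem b Q)).map (elem b Q) := (Submodule.map_comap_eq _ _).symm
    rw [hmap, ← (Submodule.equivMapOfInjective _ (elem_injective b Q) _).finrank_eq]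
    have key : ∀ x ∈ (Fsub v).comap (elem b Q), _ := fun x hx =>
      coord_eqs (fun a c d => pf (b.coord a) (b.coord c) (b.coord d) (elem b Q x))
        (fun a => b.coord a v) (fun a₁ a₂ a₃ a₄ => by
          refine pf_four v _ ?_ _ _ _ _
          obtain ⟨β, -, hβ⟩ := hx
          rw [← hβ, LinearMap.mulLeft_apply, ← mul_assoc, ι_sq_zero, zero_mul])
        x (fun k => ∑ l, Q k l * x l) (fun k => pf_pair b Q x k) (fun k => pf_tri b Q x k)
    refine no_three hQ hb2 hb3 (fun a => b.coord a v) ?_ _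
      (fun x hx => (key x hx).1) (fun x hx => (key x hx).2)
    intro h
    apply hv
    exact b.ext_elem fun a => by simpa using congrFun h a
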